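/- Let n, p ∈ ℕ, x₁,…,xₙ ∈ ℝᵖ, s₁,…,sₙ ≥ 0, m₁,…,mₙ ≥ 0, y₁,…,yₙ ∈ ℝ, uᵢ = yᵢ − mᵢ/2, and P : ℝᵖ → ℝ. Fix βₜ ∈ ℝᵖ and define Q(β) = Σᵢ sᵢ uᵢ xᵢᵀβ − (1/2) Σᵢ sᵢ ω(xᵢᵀβₜ, mᵢ)(xᵢᵀβ)² − P(β). If β′ ∈ ℝᵖ maximizes Q over ℝᵖ, then pℓ(β′) ≥ pℓ(βₜ), where pℓ(β) = Σᵢ sᵢ[yᵢ xᵢᵀβ − mᵢ log(1 + exp(xᵢᵀβ))] − P(β). That is, each EM update increases the penalized weighted log-likelihood. -/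

import Mathlib

open Matrix

/-- The Pólya-Gamma EM weight function: ω(t,m) = (m/(2t))·tanh(t/2) for t ≠ 0,
and ω(0,m) = m/4. -/
noncomputable def omegaPG (t m : ℝ) : ℝ :=
  if t = 0 then m / 4 else m / (2 * t) * Real.tanh (t / 2)

/-- The penalized weighted observed log-likelihood
pℓ(β) = Σᵢ sᵢ[yᵢ xᵢᵀβ − mᵢ log(1 + exp(xᵢᵀβ))] − P(β). -/
noncomputable def pLogLik (n p : ℕ) (x : Fin n → Fin p → ℝ) (s m y : Fin n → ℝ)
    (P : (Fin p → ℝ) → ℝ) (β : Fin p → ℝ) : ℝ :=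
  (∑ i, s i * (y i * (x i ⬝ᵥ β) - m i * Real.log (1 + Real.exp (x i ⬝ᵥ β)))) - P β

/-- The penalized Pólya-Gamma Q-function at current iterate βₜ:
Q(β) = Σᵢ sᵢ uᵢ xᵢᵀβ − (1/2) Σᵢ sᵢ ω(xᵢᵀβₜ, mᵢ)(xᵢᵀβ)² − P(β), with uᵢ = yᵢ − mᵢ/2. -/
noncomputable def Qfun (n p : ℕ) (x : Fin n → Fin p → ℝ) (s m y : Fin n → ℝ)
    (P : (Fin p → ℝ) → ℝ) (βt : Fin p → ℝ) (β : Fin p → ℝ) : ℝ :=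
  (∑ i, s i * (y i - m i / 2) * (x i ⬝ᵥ β))
    - (1 / 2) * (∑ i, s i * omegaPG (x i ⬝ᵥ βt) (m i) * (x i ⬝ᵥ β) ^ 2) - P β

/-!
The gap `Q(β) - pℓ(β)` contains neither `P` nor `y`: it equals `∑ sᵢ mᵢ G(xᵢᵀβₜ, xᵢᵀβ)`, where
`G(c, d) = log (2 cosh (d/2)) - ω(c,1) d² / 2`. Since `log (2 cosh (d/2))` has derivative `ω(d,1) d`
and, by concavity of `tanh` on `[0, ∞)`, the even function `ω(·,1)` is antitone there, `G(c, ·)` is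
maximal at `d = c`. Hence the gap is maximal at `βₜ`, and an increase of `Q` forces at least the
same increase of `pℓ`.
-/

open Set

theorem antitoneOn_dslope_of_concaveOn {s : Set ℝ} {f : ℝ → ℝ} {a : ℝ} (hf : ConcaveOn ℝ s f)
    (ha : a ∈ s) (hfa : DifferentiableAt ℝ f a) : AntitoneOn (dslope f a) s := by
  intro u hu v hv huv
  rcases huv.eq_or_lt with rfl | hlt
  · exact le_rfl
  rcases eq_or_ne u a with rfl | hua
  · rw [dslope_same, dslope_of_ne f hlt.ne']
    exact hf.slope_le_deriv ha hv hlt hfa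
  rcases eq_or_ne v a with rfl | hva
  · rw [dslope_same, dslope_of_ne f hua, slope_comm]
    exact hf.deriv_le_slope hu ha hlt hfa
  · rw [dslope_of_ne f hua, dslope_of_ne f hva]
    exact hf.slope_anti ha ⟨hu, hua⟩ ⟨hv, hva⟩ huv

theorem even_dslope_zero_of_odd {𝕜 E : Type*} [NontriviallyNormedField 𝕜] [NormedAddCommGroup E]
    [NormedSpace 𝕜 E] {f : 𝕜 → E} (hf : f.Odd) : (dslope f 0).Even := by
  intro t
  rcases eq_or_ne t 0 with rfl | ht
  · rw [neg_zero]
  · have hzero : f 0 = -f 0 := by simpa only [neg_zero] using hf 0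
    rw [dslope_of_ne f (neg_ne_zero.2 ht), dslope_of_ne f ht, slope_def_module, slope_def_module,
      hf t, sub_zero, sub_zero, inv_neg, neg_smul, ← smul_neg, neg_sub, sub_neg_eq_add, add_comm,
      sub_eq_add_neg, ← hzero]

theorem isMaxOn_sub_mul_sq_of_antitoneOn {f w : ℝ → ℝ}
    (hf : ∀ t, 0 ≤ t → HasDerivAt f (w t * t) t) (hw : AntitoneOn w (Ici 0)) {c : ℝ} (hc : 0 ≤ c) :
    IsMaxOn (fun t ↦ f t - w c / 2 * t ^ 2) (Ici 0) c := by
  have hderiv : ∀ t, 0 ≤ t →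
      HasDerivAt (fun t ↦ f t - w c / 2 * t ^ 2) ((w t - w c) * t) t := fun t ht ↦
    ((hf t ht).sub ((hasDerivAt_pow 2 t).const_mul (w c / 2))).congr_deriv (by norm_num; ring)
  refine isMaxOn_Ici_of_deriv (hderiv 0 le_rfl).continuousAt (hderiv c hc).continuousAt
    (fun t ht ↦ (hderiv t ht.1.le).differentiableAt.differentiableWithinAt)
    (fun t ht ↦ (hderiv t (hc.trans ht.le)).differentiableAt.differentiableWithinAt)
    (fun t ht ↦ ?_) (fun t ht ↦ ?_)
  · rw [(hderiv t ht.1.le).deriv]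
    exact mul_nonneg (sub_nonneg.2 (hw ht.1.le hc ht.2.le)) ht.1.le
  · have ht0 : 0 ≤ t := hc.trans (le_of_lt ht)
    rw [(hderiv t ht0).deriv]
    exact mul_nonpos_of_nonpos_of_nonneg (sub_nonpos.2 (hw hc ht0 (le_of_lt ht))) ht0

theorem hasDerivAt_tanh (t : ℝ) : HasDerivAt Real.tanh (1 / Real.cosh t ^ 2) t := by
  rw [show Real.tanh = Real.sinh / Real.cosh from funext Real.tanh_eq_sinh_div_cosh]
  exact ((Real.hasDerivAt_sinh t).div (Real.hasDerivAt_cosh t) (Real.cosh_pos t).ne').congr_deriv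
    (by rw [← sq, ← sq, Real.cosh_sq_sub_sinh_sq])

theorem concaveOn_tanh_Ici : ConcaveOn ℝ (Ici 0) Real.tanh := by
  have hdiff : Differentiable ℝ Real.tanh := fun t ↦ (hasDerivAt_tanh t).differentiableAt
  refine AntitoneOn.concaveOn_of_deriv (convex_Ici 0) hdiff.continuous.continuousOn
    hdiff.differentiableOn ?_
  rw [interior_Ici]
  intro u hu v _ huv
  rw [(hasDerivAt_tanh u).deriv, (hasDerivAt_tanh v).deriv]
  have hcosh : Real.cosh u ≤ Real.cosh v :=
    Real.cosh_le_cosh.2 (abs_le_abs_of_nonneg (le_of_lt hu) huv)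
  exact one_div_le_one_div_of_le (pow_pos (Real.cosh_pos u) 2)
    (pow_le_pow_left₀ (Real.cosh_pos u).le hcosh 2)

-- At `t = 0` the value `m / 4` comes from `dslope Real.tanh 0 0 = deriv Real.tanh 0 = 1`.
theorem omegaPG_eq_dslope_tanh (t m : ℝ) : omegaPG t m = m / 4 * dslope Real.tanh 0 (t / 2) := by
  rcases eq_or_ne t 0 with rfl | ht
  · simp [omegaPG, dslope_same, (hasDerivAt_tanh 0).deriv]
  · rw [omegaPG, if_neg ht, dslope_of_ne _ (div_ne_zero ht two_ne_zero), slope_def_field,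
      Real.tanh_zero, sub_zero, sub_zero]
    field_simp
    ring

theorem omegaPG_eq_mul_omegaPG_one (t m : ℝ) : omegaPG t m = m * omegaPG t 1 := by
  rw [omegaPG_eq_dslope_tanh, omegaPG_eq_dslope_tanh t 1]
  ring

theorem omegaPG_mul_self (t m : ℝ) : omegaPG t m * t = m / 2 * Real.tanh (t / 2) := by
  have htanh := sub_smul_dslope_of_zero Real.tanh_zero (t / 2)
  rw [smul_eq_mul, sub_zero] at htanh
  rw [omegaPG_eq_dslope_tanh]
  linear_combination m / 2 * htanh

theorem omegaPG_abs (t m : ℝ) : omegaPG |t| m = omegaPG t m := by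
  rcases abs_choice t with h | h
  · rw [h]
  · rw [h, omegaPG_eq_dslope_tanh, omegaPG_eq_dslope_tanh t, neg_div,
      even_dslope_zero_of_odd Real.tanh_neg]

theorem antitoneOn_omegaPG {m : ℝ} (hm : 0 ≤ m) : AntitoneOn (omegaPG · m) (Ici 0) := by
  intro u hu v hv huv
  have half_mem {t : ℝ} (ht : t ∈ Ici 0) : t / 2 ∈ Ici 0 := div_nonneg ht zero_le_two
  have hdslope := antitoneOn_dslope_of_concaveOn concaveOn_tanh_Ici self_mem_Ici
    (hasDerivAt_tanh 0).differentiableAt (half_mem hu) (half_mem hv)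
    (div_le_div_of_nonneg_right huv zero_le_two)
  simp only [omegaPG_eq_dslope_tanh]
  gcongr

theorem log_one_add_exp_eq (t : ℝ) :
    Real.log (1 + Real.exp t) = t / 2 + Real.log (2 * Real.cosh (t / 2)) := by
  have hfactor : 1 + Real.exp t = Real.exp (t / 2) * (2 * Real.cosh (t / 2)) := by
    rw [Real.cosh_eq, mul_div_cancel₀ _ two_ne_zero, mul_add, ← Real.exp_add, ← Real.exp_add,
      add_halves, add_neg_cancel, Real.exp_zero, add_comm]
  rw [hfactor, Real.log_mul (Real.exp_ne_zero _)
    (mul_pos two_pos (Real.cosh_pos _)).ne', Real.log_exp]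

theorem hasDerivAt_log_two_mul_cosh_half (t : ℝ) :
    HasDerivAt (fun t ↦ Real.log (2 * Real.cosh (t / 2))) (omegaPG t 1 * t) t := by
  have hcosh : HasDerivAt (fun t ↦ 2 * Real.cosh (t / 2)) (Real.sinh (t / 2)) t :=
    ((((hasDerivAt_id t).div_const 2).cosh).const_mul 2).congr_deriv (by simp only [id]; ring)
  refine (hcosh.log (mul_pos two_pos (Real.cosh_pos _)).ne').congr_deriv ?_
  rw [omegaPG_mul_self, Real.tanh_eq_sinh_div_cosh]
  ring

theorem log_two_mul_cosh_half_sub_le (c d : ℝ) :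
    Real.log (2 * Real.cosh (d / 2)) - omegaPG c 1 / 2 * d ^ 2 ≤
      Real.log (2 * Real.cosh (c / 2)) - omegaPG c 1 / 2 * c ^ 2 := by
  have cosh_abs_half (t : ℝ) : Real.cosh (|t| / 2) = Real.cosh (t / 2) := by
    rw [← Real.cosh_abs (t / 2), abs_div, abs_two]
  have hmax := isMaxOn_iff.1 (isMaxOn_sub_mul_sq_of_antitoneOn
    (fun t _ ↦ hasDerivAt_log_two_mul_cosh_half t) (antitoneOn_omegaPG zero_le_one)
    (abs_nonneg c)) |d| (abs_nonneg d)
  simpa only [cosh_abs_half, omegaPG_abs, sq_abs] using hmax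

section EM

variable {n p : ℕ} (x : Fin n → Fin p → ℝ) (s m y : Fin n → ℝ)
  (P : (Fin p → ℝ) → ℝ) (βt β : Fin p → ℝ)

theorem Qfun_sub_pLogLik :
    Qfun n p x s m y P βt β - pLogLik n p x s m y P β =
      ∑ i, s i * m i * (Real.log (2 * Real.cosh (x i ⬝ᵥ β / 2)) -
        omegaPG (x i ⬝ᵥ βt) 1 / 2 * (x i ⬝ᵥ β) ^ 2) := by
  rw [Qfun, pLogLik, sub_sub_sub_cancel_right, Finset.mul_sum, ← Finset.sum_sub_distrib,
    ← Finset.sum_sub_distrib]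
  refine Finset.sum_congr rfl fun i _ ↦ ?_
  rw [log_one_add_exp_eq, omegaPG_eq_mul_omegaPG_one _ (m i)]
  ring

theorem Qfun_sub_pLogLik_le_of_nonneg (hsm : ∀ i, 0 ≤ s i * m i) :
    Qfun n p x s m y P βt β - pLogLik n p x s m y P β ≤
      Qfun n p x s m y P βt βt - pLogLik n p x s m y P βt := by
  rw [Qfun_sub_pLogLik, Qfun_sub_pLogLik]
  exact Finset.sum_le_sum fun i _ ↦
    mul_le_mul_of_nonneg_left (log_two_mul_cosh_half_sub_le _ _) (hsm i)

end EM

theorem em_update_increases_penalized_loglik_general (n p : ℕ) (x : Fin n → Fin p → ℝ)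
    (s m y : Fin n → ℝ) (hsm : ∀ i, 0 ≤ s i * m i) (P : (Fin p → ℝ) → ℝ) (βt β' : Fin p → ℝ)
    (hQ : Qfun n p x s m y P βt βt ≤ Qfun n p x s m y P βt β') :
    pLogLik n p x s m y P β' ≥ pLogLik n p x s m y P βt := by
  linarith [Qfun_sub_pLogLik_le_of_nonneg x s m y P βt β' hsm]

/-- Each EM update increases the penalized weighted log-likelihood. -/
theorem em_update_increases_penalized_loglik (n p : ℕ) (x : Fin n → Fin p → ℝ)
    (s m y : Fin n → ℝ) (hs : ∀ i, 0 ≤ s i) (hm : ∀ i, 0 ≤ m i)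
    (P : (Fin p → ℝ) → ℝ) (βt β' : Fin p → ℝ)
    (hmax : ∀ β : Fin p → ℝ, Qfun n p x s m y P βt β ≤ Qfun n p x s m y P βt β') :
    pLogLik n p x s m y P β' ≥ pLogLik n p x s m y P βt :=
  em_update_increases_penalized_loglik_general n p x s m y
    (fun i ↦ mul_nonneg (hs i) (hm i)) P βt β' (hmax βt)
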